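/- arXiv:0704.2500 — 3 statements merged into one kernel-verified Lean document; each statement's English description precedes it below -/
import Mathlib

section
/- Consider the modified aggregation procedure of the context, which selects f̃ = f_ĩ with ĩ minimizing M̃_i := max_{ψ∈Ψ} |Δ_i(ψ)|/‖ψ‖_q (no subtraction of the noise term, so no knowledge of ε is needed). If Ψ is (γ,p)-good with respect to G, then E‖f̃ − f‖_p ≤ (2·max_{ψ∈Ψ*} ‖ψ‖_q + 1)·min_{i∈I_N} ‖f − f_i‖_p + 2κε·(max_{ψ∈Ψ*} ‖ψ‖_q)·(max_{ψ∈Ψ} ‖ψ‖_2/‖ψ‖_q) + γ + (‖f‖_p + max_{i∈I_N} ‖f_i‖_p)·δ. -/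
open MeasureTheory
open scoped ENNReal

/-- Lebesgue measure restricted to the unit cube `[0,1]^d`. -/
noncomputable def cubeMeasure (d : ℕ) : Measure (Fin d → ℝ) :=
  volume.restrict (Set.Icc 0 1)

/-- The real-valued `L^r` norm on the unit cube. -/
noncomputable def Lnorm {d : ℕ} (r : ℝ≥0∞) (g : (Fin d → ℝ) → ℝ) : ℝ :=
  (eLpNorm g r (cubeMeasure d)).toReal

/-!
On the good event the noise is at most `κ ε ‖ψ‖₂` in every direction `ψ`, so by Hölder the criterion
at the best candidate is at most its error plus `κ ε max (‖ψ‖₂ / ‖ψ‖_q)`, and the criterion at the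
selected candidate is no larger. Both candidates are tested with the same noisy observation of
`∫ ψ f`. Testing with the representer of their difference, the noise cancels and the `L^p` distance
between them is at most `γ + 2 ‖ψ‖_q` times the smaller criterion. On the bad event, of probability
at most `δ`, the error is bounded by `‖f‖_p + max ‖f_i‖_p`.
-/

section WeightedMax

variable {K : Type*} {c r : K → ℝ}

/-- The weighted maximum norm `max_k |r k| / c k`. It measures both the residuals of a candidate
(with weights `‖ψ‖_q`, giving the selection criterion `M̃`) and the noise (with weights `‖ψ‖₂`). -/
noncomputable def weightedMax (c r : K → ℝ) : ℝ :=
  ⨆ k, |r k| / c k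

theorem abs_le_weightedMax_mul [Finite K] {k : K} (hc : 0 < c k) : |r k| ≤ weightedMax c r * c k :=
  (div_le_iff₀ hc).1 (le_ciSup (f := fun k => |r k| / c k) (Set.finite_range _).bddAbove k)

theorem weightedMax_le [Nonempty K] {a : ℝ} (hc : ∀ k, 0 < c k) (h : ∀ k, |r k| ≤ a * c k) :
    weightedMax c r ≤ a :=
  ciSup_le fun k => (div_le_iff₀ (hc k)).2 (h k)

theorem measurable_weightedMax [Countable K] (c : K → ℝ) : Measurable (weightedMax c) :=
  Measurable.iSup fun k => by fun_prop

theorem abs_mul_le_of_weightedMax_le [Finite K] {s z : K → ℝ} {ε κ : ℝ} (hc : ∀ k, 0 < c k)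
    (hs : ∀ k, 0 < s k) (hε : 0 ≤ ε) (hκ : 0 ≤ κ) (hz : weightedMax s z ≤ κ) (k : K) :
    |ε * z k| ≤ κ * ε * (⨆ k, s k / c k) * c k := by
  have hsc : s k ≤ (⨆ k, s k / c k) * c k :=
    (div_le_iff₀ (hc k)).1 (le_ciSup (f := fun k => s k / c k) (Set.finite_range _).bddAbove k)
  calc |ε * z k| = ε * |z k| := by rw [abs_mul, abs_of_nonneg hε]
    _ ≤ ε * (weightedMax s z * s k) := by gcongr; exact abs_le_weightedMax_mul (hs k)
    _ ≤ ε * (κ * ((⨆ k, s k / c k) * c k)) := by gcongr; exact (hs k).le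
    _ = κ * ε * (⨆ k, s k / c k) * c k := by ring

end WeightedMax

section Selection

variable {E K : Type*} [SeminormedAddCommGroup E] [NormedSpace ℝ E]
  {φ : K → StrongDual ℝ E} {c η : K → ℝ} {τ : ℝ}

theorem weightedMax_residual_le [Nonempty K] (hc : ∀ k, 0 < c k) (hφ : ∀ k, ‖φ k‖ ≤ c k)
    (hη : ∀ k, |η k| ≤ τ * c k) (v : E) :
    weightedMax c (fun k => φ k v + η k) ≤ ‖v‖ + τ := by
  refine weightedMax_le hc fun k => ?_
  calc |φ k v + η k| ≤ |φ k v| + |η k| := abs_add_le _ _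
    _ ≤ c k * ‖v‖ + τ * c k := add_le_add ((φ k).le_of_opNorm_le (hφ k) v) (hη k)
    _ = (‖v‖ + τ) * c k := by ring

theorem norm_sub_le_of_weightedMax_residual_le [Finite K] {f g h : E} {γ : ℝ} {k : K}
    (hc : ∀ k, 0 < c k) (hφ : ∀ k, ‖φ k‖ ≤ c k) (hη : ∀ k, |η k| ≤ τ * c k)
    (hrep : ‖g - h‖ ≤ φ k (g - h) + γ)
    (hsel : weightedMax c (fun k => φ k (f - h) + η k) ≤
      weightedMax c (fun k => φ k (f - g) + η k)) :
    ‖h - f‖ ≤ (2 * c k + 1) * ‖f - g‖ + 2 * c k * τ + γ := by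
  have : Nonempty K := ⟨k⟩
  set M := weightedMax c (fun k => φ k (f - g) + η k)
  have hM : M * c k ≤ (‖f - g‖ + τ) * c k :=
    mul_le_mul_of_nonneg_right (weightedMax_residual_le hc hφ hη (f - g)) (hc k).le
  have hg : |φ k (f - g) + η k| ≤ M * c k :=
    abs_le_weightedMax_mul (r := fun k => φ k (f - g) + η k) (hc k)
  have hh : |φ k (f - h) + η k| ≤ M * c k :=
    (abs_le_weightedMax_mul (r := fun k => φ k (f - h) + η k) (hc k)).trans
      (mul_le_mul_of_nonneg_right hsel (hc k).le)
  have cancel : φ k (g - h) = (φ k (f - h) + η k) - (φ k (f - g) + η k) := by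
    simp only [map_sub]; ring
  calc ‖h - f‖ ≤ ‖f - g‖ + ‖g - h‖ := by
        rw [norm_sub_rev h f]; exact norm_sub_le_norm_sub_add_norm_sub f g h
    _ ≤ ‖f - g‖ + (2 * (M * c k) + γ) := by
        linarith [(abs_le.1 hg).1, (abs_le.1 hh).2]
    _ ≤ (2 * c k + 1) * ‖f - g‖ + 2 * c k * τ + γ := by linarith

end Selection

section LpNorm

variable {α G ι : Type*} [MeasurableSpace α] {μ : Measure α} [NormedAddCommGroup G]
  {p q : ℝ≥0∞} {f g : α → G}

theorem toReal_eLpNorm_pos_of_toReal_eLpNorm_pos (hf : MemLp f q μ) (hq : q ≠ 0)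
    (hp : 0 < (eLpNorm f p μ).toReal) : 0 < (eLpNorm f q μ).toReal := by
  refine ENNReal.toReal_pos (fun h0 => hp.ne' ?_) hf.eLpNorm_ne_top
  have hf0 : f =ᵐ[μ] 0 := (eLpNorm_eq_zero_iff hf.aestronglyMeasurable hq).1 h0
  rw [eLpNorm_congr_ae hf0, eLpNorm_zero, ENNReal.toReal_zero]

theorem toReal_eLpNorm_sub_le (hp : 1 ≤ p) (hf : MemLp f p μ) (hg : MemLp g p μ) :
    (eLpNorm (f - g) p μ).toReal ≤ (eLpNorm f p μ).toReal + (eLpNorm g p μ).toReal := by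
  rw [← ENNReal.toReal_add hf.eLpNorm_ne_top hg.eLpNorm_ne_top]
  exact ENNReal.toReal_mono (ENNReal.add_ne_top.2 ⟨hf.eLpNorm_ne_top, hg.eLpNorm_ne_top⟩)
    (eLpNorm_sub_le hf.aestronglyMeasurable hg.aestronglyMeasurable hp)

theorem toReal_eLpNorm_sub_le_add_iSup [Finite ι] {F : ι → α → G} (hp : 1 ≤ p)
    (hf : MemLp f p μ) (hF : ∀ i, MemLp (F i) p μ) (i : ι) :
    (eLpNorm (F i - f) p μ).toReal ≤
      (eLpNorm f p μ).toReal + ⨆ i, (eLpNorm (F i) p μ).toReal := by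
  refine (toReal_eLpNorm_sub_le hp (hF i) hf).trans ?_
  rw [add_comm]
  exact add_le_add_right
    (le_ciSup (f := fun i => (eLpNorm (F i) p μ).toReal) (Set.finite_range _).bddAbove i) _

end LpNorm

section Representers

variable {α : Type*} [MeasurableSpace α] {μ : Measure α} {p q : ℝ≥0∞} {f g h : α → ℝ}

/-- `ψ` represents the `L^p` norm of `g` up to `γ`: a set of functions is `(γ,p)`-good with respect
to `G` when it contains such a `ψ` for every `g ∈ G`. -/
def IsRepresenter (μ : Measure α) (p : ℝ≥0∞) (γ : ℝ) (ψ g : α → ℝ) : Prop :=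
  |(∫ t, ψ t * g t ∂μ) - (eLpNorm g p μ).toReal| ≤ γ

/-- The selection criterion `M̃` at the candidate `g`, when `∫ ψ k * f` is observed up to the
noise `η k`. -/
noncomputable def selectionCriterion {K : Type*} (μ : Measure α) (q : ℝ≥0∞) (ψ : K → α → ℝ)
    (η : K → ℝ) (f g : α → ℝ) : ℝ :=
  weightedMax (fun k => (eLpNorm (ψ k) q μ).toReal)
    (fun k => (∫ t, ψ k t * (f t - g t) ∂μ) + η k)

/-- Integration against `ψ ∈ L^q`, as a continuous linear functional on `L^p`. -/
noncomputable def integralFunctional (p : ℝ≥0∞) [Fact (1 ≤ p)] [Fact (1 ≤ q)]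
    [q.HolderConjugate p] {ψ : α → ℝ} (hψ : MemLp ψ q μ) : StrongDual ℝ (Lp ℝ p μ) :=
  (ContinuousLinearMap.mul ℝ ℝ).lpPairing μ q p hψ.toLp

section IntegralFunctional

variable [Fact (1 ≤ p)] [Fact (1 ≤ q)] [q.HolderConjugate p] {ψ : α → ℝ}

theorem integralFunctional_toLp (hψ : MemLp ψ q μ) (hf : MemLp f p μ) :
    integralFunctional p hψ hf.toLp = ∫ t, ψ t * f t ∂μ := by
  rw [integralFunctional, ContinuousLinearMap.lpPairing_eq_integral]
  refine integral_congr_ae ?_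
  filter_upwards [hψ.coeFn_toLp, hf.coeFn_toLp] with t hψt hft
  rw [hψt, hft, ContinuousLinearMap.mul_apply']

theorem norm_integralFunctional_le (hψ : MemLp ψ q μ) :
    ‖integralFunctional p hψ‖ ≤ (eLpNorm ψ q μ).toReal := by
  refine ContinuousLinearMap.opNorm_le_bound _ ENNReal.toReal_nonneg fun v => ?_
  calc ‖integralFunctional p hψ v‖
      = ‖L1.integral ((ContinuousLinearMap.mul ℝ ℝ).holder 1 hψ.toLp v)‖ := by
        rw [L1.integral_eq' (𝕜 := ℝ)]; rfl
    _ ≤ ‖(ContinuousLinearMap.mul ℝ ℝ).holder 1 hψ.toLp v‖ := L1.norm_integral_le _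
    _ ≤ ‖ContinuousLinearMap.mul ℝ ℝ‖ * ‖hψ.toLp‖ * ‖v‖ :=
        ContinuousLinearMap.norm_holder_apply_apply_le _ _ _
    _ = (eLpNorm ψ q μ).toReal * ‖v‖ := by
        rw [ContinuousLinearMap.opNorm_mul, one_mul, Lp.norm_toLp]

end IntegralFunctional

section SelectionCriterion

variable [p.HolderConjugate q] {K : Type*} [Finite K] {ψ : K → α → ℝ} {η : K → ℝ} {γ τ : ℝ}

theorem toReal_eLpNorm_sub_le_of_selectionCriterion_le {k : K}
    (hf : MemLp f p μ) (hg : MemLp g p μ) (hh : MemLp h p μ) (hψ : ∀ k, MemLp (ψ k) q μ)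
    (hψpos : ∀ k, 0 < (eLpNorm (ψ k) q μ).toReal)
    (hη : ∀ k, |η k| ≤ τ * (eLpNorm (ψ k) q μ).toReal)
    (hrep : IsRepresenter μ p γ (ψ k) (g - h))
    (hsel : selectionCriterion μ q ψ η f h ≤ selectionCriterion μ q ψ η f g) :
    (eLpNorm (h - f) p μ).toReal ≤
      (2 * (eLpNorm (ψ k) q μ).toReal + 1) * (eLpNorm (f - g) p μ).toReal
        + 2 * (eLpNorm (ψ k) q μ).toReal * τ + γ := by
  have : Fact (1 ≤ p) := ⟨ENNReal.HolderConjugate.one_le p q⟩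
  have : Fact (1 ≤ q) := ⟨ENNReal.HolderConjugate.one_le q p⟩
  have pairing {u v : α → ℝ} (hu : MemLp u p μ) (hv : MemLp v p μ) (k : K) :
      integralFunctional p (hψ k) (hu.toLp - hv.toLp) = ∫ t, ψ k t * (u t - v t) ∂μ := by
    rw [← MemLp.toLp_sub, integralFunctional_toLp]; rfl
  have dist {u v : α → ℝ} (hu : MemLp u p μ) (hv : MemLp v p μ) :
      ‖hu.toLp - hv.toLp‖ = (eLpNorm (u - v) p μ).toReal := by
    rw [← MemLp.toLp_sub, Lp.norm_toLp]
  rw [← dist hh hf, ← dist hf hg]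
  refine norm_sub_le_of_weightedMax_residual_le
    (φ := fun k => integralFunctional p (hψ k)) hψpos
    (fun k => norm_integralFunctional_le (hψ k)) hη ?_ ?_
  · rw [pairing hg hh, dist hg hh]
    exact neg_le_sub_iff_le_add.1 (abs_le.1 hrep).1
  · simpa only [pairing hf hg, pairing hf hh, selectionCriterion] using hsel

theorem toReal_eLpNorm_sub_le_iSup_of_selectionCriterion_le {ι : Type*} [Finite ι]
    {F : ι → α → ℝ} {rep : ι → K} {i j : ι} (hf : MemLp f p μ) (hF : ∀ i, MemLp (F i) p μ)
    (hψ : ∀ k, MemLp (ψ k) q μ) (hψpos : ∀ k, 0 < (eLpNorm (ψ k) q μ).toReal) (hγ : 0 ≤ γ)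
    (hτ : 0 ≤ τ) (hη : ∀ k, |η k| ≤ τ * (eLpNorm (ψ k) q μ).toReal)
    (hrep : ∀ i, i ≠ j → IsRepresenter μ p γ (ψ (rep i)) (F j - F i))
    (hsel : selectionCriterion μ q ψ η f (F i) ≤ selectionCriterion μ q ψ η f (F j)) :
    (eLpNorm (F i - f) p μ).toReal ≤
      (2 * (⨆ i : {i // i ≠ j}, (eLpNorm (ψ (rep i)) q μ).toReal) + 1) *
          (eLpNorm (f - F j) p μ).toReal
        + 2 * (⨆ i : {i // i ≠ j}, (eLpNorm (ψ (rep i)) q μ).toReal) * τ + γ := by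
  set S := ⨆ i : {i // i ≠ j}, (eLpNorm (ψ (rep i)) q μ).toReal
  have hS : 0 ≤ S := Real.iSup_nonneg fun i => ENNReal.toReal_nonneg
  by_cases hij : i = j
  · have : 0 ≤ 2 * S * (eLpNorm (f - F j) p μ).toReal + 2 * S * τ := by positivity
    rw [hij, eLpNorm_sub_comm]
    linarith
  · have hcS : (eLpNorm (ψ (rep i)) q μ).toReal ≤ S :=
      le_ciSup (f := fun i : {i // i ≠ j} => (eLpNorm (ψ (rep i)) q μ).toReal)
        (Set.finite_range _).bddAbove ⟨i, hij⟩
    refine (toReal_eLpNorm_sub_le_of_selectionCriterion_le hf (hF j) (hF i) hψ hψpos hη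
      (hrep i hij) hsel).trans ?_
    gcongr

end SelectionCriterion

end Representers

theorem integral_le_add_mul_measureReal {Ω : Type*} [MeasurableSpace Ω] {P : Measure Ω}
    [IsProbabilityMeasure P] {X : Ω → ℝ} (hX : Integrable X P) {A : Set Ω} (hA : MeasurableSet A)
    {B C : ℝ} (hB : 0 ≤ B) (hXB : ∀ ω ∉ A, X ω ≤ B) (hXC : ∀ ω ∈ A, X ω ≤ C) :
    ∫ ω, X ω ∂P ≤ B + C * P.real A := by
  have hAc : ∫ ω in Aᶜ, X ω ∂P ≤ B := by
    calc ∫ ω in Aᶜ, X ω ∂P ≤ ∫ _ in Aᶜ, B ∂P :=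
          setIntegral_mono_on hX.integrableOn integrableOn_const hA.compl hXB
      _ = P.real Aᶜ * B := by rw [setIntegral_const, smul_eq_mul]
      _ ≤ B := mul_le_of_le_one_left hB measureReal_le_one
  have hAC : ∫ ω in A, X ω ∂P ≤ C * P.real A := by
    calc ∫ ω in A, X ω ∂P ≤ ∫ _ in A, C ∂P :=
          setIntegral_mono_on hX.integrableOn integrableOn_const hA hXC
      _ = C * P.real A := by rw [setIntegral_const, smul_eq_mul, mul_comm]
  rw [← integral_add_compl hA hX]
  linarith

theorem stmt_8_general
    {α : Type*} [MeasurableSpace α] {μ : Measure α} {p q : ℝ≥0∞} [p.HolderConjugate q]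
    {ι : Type*} [Finite ι] [MeasurableSpace ι] [DiscreteMeasurableSpace ι]
    {f : α → ℝ} (hf : MemLp f p μ) {F : ι → α → ℝ} (hF : ∀ i, MemLp (F i) p μ)
    {K : Type*} [Finite K] {ψ : K → α → ℝ} (hψ : ∀ k, MemLp (ψ k) q μ)
    (hψpos : ∀ k, 0 < (eLpNorm (ψ k) q μ).toReal)
    {γ : ℝ} (hγ : 0 ≤ γ) {j : ι} {rep : ι → K}
    (hrep : ∀ i, i ≠ j → IsRepresenter μ p γ (ψ (rep i)) (F j - F i))
    {Ω : Type*} [MeasurableSpace Ω] {P : Measure Ω} [IsProbabilityMeasure P]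
    {Z : K → Ω → ℝ} (hZ : ∀ k, Measurable (Z k)) {s : K → ℝ} (hs : ∀ k, 0 < s k)
    {ε κ δ : ℝ} (hε : 0 ≤ ε) (hκ : 0 ≤ κ)
    (hδ : P.real {ω | κ ≤ weightedMax s fun k => Z k ω} ≤ δ)
    {sel : Ω → ι} (hsel : Measurable sel)
    (hmin : ∀ ω, selectionCriterion μ q ψ (fun k => ε * Z k ω) f (F (sel ω)) ≤
      selectionCriterion μ q ψ (fun k => ε * Z k ω) f (F j)) :
    ∫ ω, (eLpNorm (F (sel ω) - f) p μ).toReal ∂P ≤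
      (2 * (⨆ i : {i // i ≠ j}, (eLpNorm (ψ (rep i)) q μ).toReal) + 1) *
          (eLpNorm (f - F j) p μ).toReal
        + 2 * κ * ε * (⨆ i : {i // i ≠ j}, (eLpNorm (ψ (rep i)) q μ).toReal) *
            (⨆ k, s k / (eLpNorm (ψ k) q μ).toReal)
        + γ + ((eLpNorm f p μ).toReal + ⨆ i, (eLpNorm (F i) p μ).toReal) * δ := by
  set c : K → ℝ := fun k => (eLpNorm (ψ k) q μ).toReal
  set S := ⨆ i : {i // i ≠ j}, c (rep i)
  set R := ⨆ k, s k / c k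
  set C := (eLpNorm f p μ).toReal + ⨆ i, (eLpNorm (F i) p μ).toReal
  set m := (eLpNorm (f - F j) p μ).toReal
  set B := (2 * S + 1) * m + 2 * κ * ε * S * R + γ
  have hS : 0 ≤ S := Real.iSup_nonneg fun i => (hψpos (rep i)).le
  have hR : 0 ≤ R := Real.iSup_nonneg fun k => div_nonneg (hs k).le (hψpos k).le
  have hC : 0 ≤ C :=
    add_nonneg ENNReal.toReal_nonneg (Real.iSup_nonneg fun i => ENNReal.toReal_nonneg)
  have error_le : ∀ i, (eLpNorm (F i - f) p μ).toReal ≤ C :=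
    toReal_eLpNorm_sub_le_add_iSup (ENNReal.HolderConjugate.one_le p q) hf hF
  have error_integrable : Integrable (fun ω => (eLpNorm (F (sel ω) - f) p μ).toReal) P :=
    .of_bound
      ((Measurable.of_discrete (f := fun i => (eLpNorm (F i - f) p μ).toReal)).comp
        hsel).aestronglyMeasurable C
      (.of_forall fun ω => (Real.norm_of_nonneg ENNReal.toReal_nonneg).trans_le (error_le (sel ω)))
  have bad_measurable : MeasurableSet {ω | κ ≤ weightedMax s fun k => Z k ω} :=
    measurableSet_le measurable_const ((measurable_weightedMax s).comp (measurable_pi_lambda _ hZ))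
  have error_good : ∀ ω ∉ {ω | κ ≤ weightedMax s fun k => Z k ω},
      (eLpNorm (F (sel ω) - f) p μ).toReal ≤ B := fun ω hω => by
    have noise_le := abs_mul_le_of_weightedMax_le hψpos hs hε hκ (not_le.1 hω).le
    refine (toReal_eLpNorm_sub_le_iSup_of_selectionCriterion_le hf hF hψ hψpos hγ
      (by positivity) noise_le hrep (hmin ω)).trans_eq ?_
    ring
  calc ∫ ω, (eLpNorm (F (sel ω) - f) p μ).toReal ∂P
      ≤ B + C * P.real {ω | κ ≤ weightedMax s fun k => Z k ω} :=
        integral_le_add_mul_measureReal error_integrable bad_measurable (by positivity) error_good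
          fun ω _ => error_le (sel ω)
    _ ≤ B + C * δ := by gcongr

/-- Theorem 3 of the paper: oracle inequality for the modified
aggregation procedure, which does not subtract the noise term. -/
theorem stmt_8
    {d N : ℕ} (hd : 1 ≤ d) (hN : 2 ≤ N)
    (p q : ℝ≥0∞) (hp : 1 ≤ p) (hpq : 1 / p + 1 / q = 1)
    (γ : ℝ) (hγ : 0 ≤ γ)
    (f : (Fin d → ℝ) → ℝ) (F : Fin N → (Fin d → ℝ) → ℝ)
    (hfm : Measurable f) (hFm : ∀ i, Measurable (F i))
    (hf : eLpNorm f p (cubeMeasure d) ≠ ⊤)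
    (hF : ∀ i, eLpNorm (F i) p (cubeMeasure d) ≠ ⊤)
    (hFdist : ∀ i j, i ≠ j → F i ≠ F j)
    {K : Type} [Fintype K] [Nonempty K]
    (ψ : K → (Fin d → ℝ) → ℝ) (hψm : ∀ k, Measurable (ψ k))
    (hψq : ∀ k, eLpNorm (ψ k) q (cubeMeasure d) ≠ ⊤)
    (hψ2 : ∀ k, eLpNorm (ψ k) 2 (cubeMeasure d) ≠ ⊤)
    (hψpos : ∀ k, 0 < Lnorm q (ψ k))
    (rep : Fin N → Fin N → K)
    (hgood : ∀ i j, i ≠ j →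
      |(∫ t, ψ (rep i j) t * (F i t - F j t) ∂(cubeMeasure d)) -
        Lnorm p (fun t => F i t - F j t)| ≤ γ)
    {Ω : Type} [MeasurableSpace Ω] (P : Measure Ω) [IsProbabilityMeasure P]
    (ε δ : ℝ) (hε : 0 < ε) (hδ0 : 0 < δ) (hδ1 : δ < 1)
    (Z : K → Ω → ℝ) (hZm : ∀ k, Measurable (Z k))
    (κ : ℝ) (hκpos : 0 < κ)
    (hκ : (P {ω | κ ≤ ⨆ k, |Z k ω| / Lnorm 2 (ψ k)}).toReal ≤ δ)
    (Δ : Fin N → K → Ω → ℝ)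
    (hΔ : ∀ i k ω, Δ i k ω =
      (∫ t, ψ k t * (f t - F i t) ∂(cubeMeasure d)) + ε * Z k ω)
    (Mtil : Fin N → Ω → ℝ)
    (hM : ∀ i ω, Mtil i ω = ⨆ k, |Δ i k ω| / Lnorm q (ψ k))
    (itil : Ω → Fin N) (hitilm : Measurable itil)
    (hmin : ∀ ω i, Mtil (itil ω) ω ≤ Mtil i ω)
    (istar : Fin N)
    (histar : ∀ i, Lnorm p (fun t => f t - F istar t) ≤ Lnorm p (fun t => f t - F i t)) :
    ∫ ω, Lnorm p (fun t => F (itil ω) t - f t) ∂P ≤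
      (2 * (⨆ j : {j : Fin N // j ≠ istar}, Lnorm q (ψ (rep istar j.1))) + 1) *
          (⨅ i, Lnorm p (fun t => f t - F i t))
        + 2 * κ * ε * (⨆ j : {j : Fin N // j ≠ istar}, Lnorm q (ψ (rep istar j.1))) *
            (⨆ k, Lnorm 2 (ψ k) / Lnorm q (ψ k))
        + γ + (Lnorm p f + ⨆ i, Lnorm p (F i)) * δ := by
  have hpq' : p.HolderConjugate q := ENNReal.holderConjugate_iff.2 (by simpa using hpq)
  have hinf : ⨅ i, Lnorm p (fun t => f t - F i t) = Lnorm p (fun t => f t - F istar t) :=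
    IsLeast.csInf_eq ⟨⟨istar, rfl⟩, Set.forall_mem_range.2 histar⟩
  have hψpos₂ : ∀ k, 0 < Lnorm 2 (ψ k) := fun k =>
    toReal_eLpNorm_pos_of_toReal_eLpNorm_pos
      ⟨(hψm k).aestronglyMeasurable, (hψ2 k).lt_top⟩ two_ne_zero (hψpos k)
  rw [hinf]
  exact stmt_8_general ⟨hfm.aestronglyMeasurable, hf.lt_top⟩
    (fun i => ⟨(hFm i).aestronglyMeasurable, (hF i).lt_top⟩)
    (fun k => ⟨(hψm k).aestronglyMeasurable, (hψq k).lt_top⟩) hψpos hγ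
    (fun i hi => hgood istar i hi.symm) hZm hψpos₂ hε.le hκpos.le hκ hitilm
    (fun ω => by simpa only [hM, hΔ, selectionCriterion, weightedMax, Lnorm] using hmin ω istar)
end

section
/- For the L²-aggregation procedure described in the context, the selected estimator f̄ = f_ī satisfies the exact oracle inequality E‖f̄ − f‖_2 ≤ min_{i∈I_N} ‖f_i − f‖_2 + 8ε√(2 ln N). -/
open MeasureTheory
open scoped ENNReal

/-!
By polarization the contrast of `f_i` against `f_j` is
`(‖f_i - f‖² - ‖f_j - f‖²) / (2 ‖f_i - f_j‖)`. If `s` is a best index, its contrasts are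
nonpositive, so its score is at most some noise term `ε Z_{ks}`, while by the triangle inequality
the score of `i` is at least `(‖f_i - f‖ - ‖f_s - f‖) / 2 - ε Z_{is}`. Hence the selected index
loses at most `4 ε max_j Z_{js}` against `s`, with `Z_{ss} = 0`. Only variables `Z_{js}` with the
deterministic index `s` enter, so the sub-Gaussian maximal inequality bounds the expected loss by
`4 ε √(2 log N)`.
-/

open ProbabilityTheory
open scoped RealInnerProductSpace NNReal

section SubGaussianMaximal

variable {Ω : Type*} [MeasurableSpace Ω] {P : Measure Ω}

lemma hasSubgaussianMGF_of_le {X : Ω → ℝ} {c c' : ℝ≥0} (hX : HasSubgaussianMGF X c P)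
    (hcc' : c ≤ c') : HasSubgaussianMGF X c' P where
  integrable_exp_mul := hX.integrable_exp_mul
  mgf_le t := (hX.mgf_le t).trans (by gcongr)

lemma hasSubgaussianMGF_of_map_eq_gaussianReal {X : Ω → ℝ} {v : ℝ≥0}
    (hX : P.map X = gaussianReal 0 v) : HasSubgaussianMGF X v P where
  integrable_exp_mul t := by
    have hXm : AEMeasurable X P := .of_map_ne_zero (by rw [hX]; exact NeZero.ne _)
    have hexp := integrable_exp_mul_gaussianReal (μ := 0) (v := v) t
    exact (hX ▸ hexp).comp_aemeasurable hXm
  mgf_le t := by simp [mgf_gaussianReal hX]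

variable {ι : Type*} [Fintype ι] {X : ι → Ω → ℝ} {c : ℝ≥0} {Y : Ω → ℝ}

lemma integrable_sum_exp_mul (hX : ∀ i, HasSubgaussianMGF (X i) c P) (t : ℝ) :
    Integrable (fun ω ↦ ∑ i, Real.exp (t * X i ω)) P :=
  integrable_finsetSum _ fun i _ ↦ (hX i).integrable_exp_mul t

lemma integral_sum_exp_mul_le (hX : ∀ i, HasSubgaussianMGF (X i) c P) (t : ℝ) :
    ∫ ω, ∑ i, Real.exp (t * X i ω) ∂P ≤ Fintype.card ι * Real.exp (c * t ^ 2 / 2) :=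
  calc ∫ ω, ∑ i, Real.exp (t * X i ω) ∂P = ∑ i, mgf (X i) P t :=
        integral_finsetSum _ fun i _ ↦ (hX i).integrable_exp_mul t
    _ ≤ ∑ _i : ι, Real.exp (c * t ^ 2 / 2) := Finset.sum_le_sum fun i _ ↦ (hX i).mgf_le t
    _ = Fintype.card ι * Real.exp (c * t ^ 2 / 2) := by simp

variable [IsProbabilityMeasure P]

lemma mul_integral_le_log_card_add (hX : ∀ i, HasSubgaussianMGF (X i) c P) (hY : Integrable Y P)
    (hYX : ∀ᵐ ω ∂P, ∃ i, Y ω ≤ X i ω) {t : ℝ} (ht : 0 ≤ t) :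
    t * ∫ ω, Y ω ∂P ≤ Real.log (Fintype.card ι) + c * t ^ 2 / 2 := by
  obtain ⟨-, i₀, -⟩ := hYX.exists
  have hcard : (0 : ℝ) < Fintype.card ι := by exact_mod_cast Fintype.card_pos_iff.2 ⟨i₀⟩
  set b := Real.log (Fintype.card ι) + c * t ^ 2 / 2 with hb
  -- `b` is chosen so that `exp (-b) * ∑ i, exp (t * X i)` has mean at most `1`.
  have htangent (x : ℝ) : x ≤ b - 1 + Real.exp (-b) * Real.exp x := by
    rw [← Real.exp_add]
    linarith [Real.add_one_le_exp (-b + x)]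
  have hpointwise : ∀ᵐ ω ∂P,
      t * Y ω ≤ b - 1 + Real.exp (-b) * ∑ i, Real.exp (t * X i ω) := by
    filter_upwards [hYX] with ω ⟨i, hi⟩
    have hsingle : Real.exp (t * X i ω) ≤ ∑ i, Real.exp (t * X i ω) :=
      Finset.single_le_sum (f := fun i ↦ Real.exp (t * X i ω))
        (fun _ _ ↦ (Real.exp_pos _).le) (Finset.mem_univ i)
    calc t * Y ω ≤ t * X i ω := by gcongr
      _ ≤ b - 1 + Real.exp (-b) * Real.exp (t * X i ω) := htangent _
      _ ≤ _ := by gcongr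
  have hsum := (integrable_sum_exp_mul hX t).const_mul (Real.exp (-b))
  calc t * ∫ ω, Y ω ∂P = ∫ ω, t * Y ω ∂P := (integral_const_mul t Y).symm
    _ ≤ ∫ ω, (b - 1 + Real.exp (-b) * ∑ i, Real.exp (t * X i ω)) ∂P :=
        integral_mono_ae (hY.const_mul t) ((integrable_const _).add hsum) hpointwise
    _ = b - 1 + Real.exp (-b) * ∫ ω, ∑ i, Real.exp (t * X i ω) ∂P := by
        rw [integral_add (integrable_const _) hsum, integral_const_mul, integral_const,
          probReal_univ, one_smul]
    _ ≤ b - 1 + Real.exp (-b) * (Fintype.card ι * Real.exp (c * t ^ 2 / 2)) := by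
        gcongr
        exact integral_sum_exp_mul_le hX t
    _ = b := by
        rw [← Real.exp_log hcard, ← Real.exp_add, ← hb, ← Real.exp_add, neg_add_cancel,
          Real.exp_zero, sub_add_cancel]

theorem integral_le_sqrt_two_mul_log_card (hX : ∀ i, HasSubgaussianMGF (X i) c P)
    (hY : Integrable Y P) (hYX : ∀ᵐ ω ∂P, ∃ i, Y ω ≤ X i ω) :
    ∫ ω, Y ω ∂P ≤ √(2 * c * Real.log (Fintype.card ι)) := by
  rcases le_total (∫ ω, Y ω ∂P) 0 with hneg | hpos
  · exact hneg.trans (Real.sqrt_nonneg _)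
  have hquadratic (t : ℝ) : 0 ≤ c / 2 * (t * t) + -(∫ ω, Y ω ∂P) * t +
      Real.log (Fintype.card ι) := by
    rcases le_total 0 t with ht | ht
    · linarith [mul_integral_le_log_card_add hX hY hYX ht]
    · have hlinear := mul_nonneg_of_nonpos_of_nonpos (neg_nonpos.2 hpos) ht
      have hsquare := mul_nonneg (show (0 : ℝ) ≤ c / 2 from by positivity) (mul_self_nonneg t)
      linarith [Real.log_natCast_nonneg (Fintype.card ι)]
  have hdiscrim := discrim_le_zero hquadratic
  rw [discrim] at hdiscrim
  exact Real.le_sqrt_of_sq_le (by linarith)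

theorem integral_le_mul_sqrt_two_mul_log_card {r : ℝ} (hr : 0 ≤ r)
    (hX : ∀ i, HasSubgaussianMGF (X i) c P) (hY : Integrable Y P)
    (hYX : ∀ᵐ ω ∂P, ∃ i, Y ω ≤ r * X i ω) :
    ∫ ω, Y ω ∂P ≤ r * √(2 * c * Real.log (Fintype.card ι)) := by
  have hrX (i : ι) :
      HasSubgaussianMGF (fun ω ↦ r * X i ω) (NNReal.mk (r ^ 2) (sq_nonneg r) * c) P :=
    (hX i).const_mul r
  refine (integral_le_sqrt_two_mul_log_card hrX hY hYX).trans_eq ?_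
  rw [NNReal.coe_mul, NNReal.coe_mk, mul_left_comm, mul_assoc, Real.sqrt_mul (sq_nonneg r),
    Real.sqrt_sq hr]

end SubGaussianMaximal

section Selection

variable {E : Type*} [NormedAddCommGroup E] [InnerProductSpace ℝ E] {ι : Type*}

/-- The contrast `⟨ψ, u⟩ - ⟨ψ, f⟩` for the normalized difference `ψ` of `x` and `y` and their
midpoint `u`; its sign tells which of the two points is farther from `f`. -/
noncomputable def midpointContrast (f x y : E) : ℝ :=
  ⟪NormedSpace.normalize (x - y), midpoint ℝ x y⟫ - ⟪NormedSpace.normalize (x - y), f⟫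

/-- The criterion `M̄ᵢ` minimized by the selection rule, for the contrasts of `F i` with the other
points observed under a realization `z` of the noise. When `i` is the only index the supremum is
empty, and the score is `0`. -/
noncomputable def midpointScore (f : E) (F : ι → E) (ε : ℝ) (z : ι → ι → ℝ) (i : ι) : ℝ :=
  ⨆ j : {j // j ≠ i}, (midpointContrast f (F i) (F j) - ε * z i j)

lemma midpointContrast_eq_norm_sq_sub_norm_sq_div (f x y : E) :
    midpointContrast f x y = (‖x - f‖ ^ 2 - ‖y - f‖ ^ 2) / (2 * ‖x - y‖) := by
  have hdiff : x - y = (x - f) - (y - f) := by abel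
  have hmid : midpoint ℝ x y - f = (2⁻¹ : ℝ) • ((x - f) + (y - f)) := by
    rw [midpoint_eq_smul_add, invOf_eq_inv]
    module
  have hinner : ⟪x - y, midpoint ℝ x y - f⟫ = (‖x - f‖ ^ 2 - ‖y - f‖ ^ 2) / 2 := by
    rw [hmid, hdiff, real_inner_smul_right]
    generalize x - f = v, y - f = w
    rw [inner_add_right, inner_sub_left, inner_sub_left, real_inner_self_eq_norm_sq,
      real_inner_self_eq_norm_sq, real_inner_comm v w]
    ring
  rw [midpointContrast, ← inner_sub_right, NormedSpace.normalize, real_inner_smul_left, hinner]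
  field_simp

lemma midpointContrast_nonpos {f x y : E} (hxy : ‖x - f‖ ≤ ‖y - f‖) :
    midpointContrast f x y ≤ 0 := by
  rw [midpointContrast_eq_norm_sq_sub_norm_sq_div]
  exact div_nonpos_of_nonpos_of_nonneg (sub_nonpos.2 (by gcongr)) (by positivity)

lemma norm_sub_sub_norm_sub_le_two_mul_midpointContrast {f x y : E} (hne : x ≠ y)
    (hyx : ‖y - f‖ ≤ ‖x - f‖) : ‖x - f‖ - ‖y - f‖ ≤ 2 * midpointContrast f x y := by
  have hdist : 0 < ‖x - y‖ := norm_sub_pos_iff.2 hne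
  have htriangle : ‖x - y‖ ≤ ‖x - f‖ + ‖y - f‖ := by
    simpa using norm_sub_le (x - f) (y - f)
  calc ‖x - f‖ - ‖y - f‖ = (‖x - f‖ - ‖y - f‖) * ‖x - y‖ / ‖x - y‖ := by field_simp
    _ ≤ (‖x - f‖ - ‖y - f‖) * (‖x - f‖ + ‖y - f‖) / ‖x - y‖ := by
        have := sub_nonneg.2 hyx
        gcongr
    _ = 2 * midpointContrast f x y := by
        rw [midpointContrast_eq_norm_sq_sub_norm_sq_div]
        field_simp
        ring

lemma exists_norm_sub_le_add_of_midpointScore_le [Finite ι] {f : E} {F : ι → E} {ε : ℝ}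
    {z : ι → ι → ℝ} {i s : ι} (hε : 0 ≤ ε) (hs : ∀ j, ‖F s - f‖ ≤ ‖F j - f‖)
    (hne : F i ≠ F s) (hz : ∀ j, s ≠ j → z j s = -z s j)
    (hscore : midpointScore f F ε z i ≤ midpointScore f F ε z s) :
    ∃ j ≠ s, ‖F i - f‖ ≤ ‖F s - f‖ + 4 * ε * z j s := by
  have his : i ≠ s := ne_of_apply_ne F hne
  have : Nonempty {j // j ≠ s} := ⟨⟨i, his⟩⟩
  -- `k` attains the score of `s`; the witness is whichever of `i` and `k` carries the larger noise.
  obtain ⟨⟨k, hks⟩, hk⟩ := exists_eq_ciSup_of_finite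
    (f := fun j : {j // j ≠ s} ↦ midpointContrast f (F s) (F j) - ε * z s j)
  have hlower : midpointContrast f (F i) (F s) - ε * z i s ≤ midpointScore f F ε z i :=
    le_ciSup (f := fun j : {j // j ≠ i} ↦ midpointContrast f (F i) (F j) - ε * z i j)
      (Set.finite_range _).bddAbove ⟨s, his.symm⟩
  have hupper : midpointScore f F ε z s ≤ ε * z k s := by
    rw [midpointScore, ← hk, hz k hks.symm]
    linarith [midpointContrast_nonpos (hs k)]
  have hnoise : ‖F i - f‖ - ‖F s - f‖ ≤ 2 * (ε * z i s + ε * z k s) := by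
    linarith [norm_sub_sub_norm_sub_le_two_mul_midpointContrast hne (hs i)]
  rcases le_total (z i s) (z k s) with hik | hki
  · exact ⟨k, hks, by linarith [mul_le_mul_of_nonneg_left hik hε]⟩
  · exact ⟨i, his, by linarith [mul_le_mul_of_nonneg_left hki hε]⟩

theorem stmt_9_general [Fintype ι] [MeasurableSpace ι] [DiscreteMeasurableSpace ι]
    {f : E} {F : ι → E} (hF : Function.Injective F) {ε : ℝ} (hε : 0 ≤ ε)
    {Ω : Type*} [MeasurableSpace Ω] {P : Measure Ω} [IsProbabilityMeasure P]
    {Z : ι → ι → Ω → ℝ} {c : ℝ≥0} (hZ : ∀ i j, i ≠ j → HasSubgaussianMGF (Z i j) c P)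
    (hZanti : ∀ i j, i ≠ j → ∀ᵐ ω ∂P, Z j i ω = -Z i j ω)
    {ibar : Ω → ι} (hibar : Measurable ibar)
    (hmin : ∀ᵐ ω ∂P, ∀ i, midpointScore f F ε (fun i j ↦ Z i j ω) (ibar ω) ≤
      midpointScore f F ε (fun i j ↦ Z i j ω) i) :
    ∫ ω, ‖F (ibar ω) - f‖ ∂P ≤
      (⨅ i, ‖F i - f‖) + 4 * ε * √(2 * c * Real.log (Fintype.card ι)) := by
  classical
  have : Nonempty ι := P.nonempty_of_neZero.map ibar
  obtain ⟨s, hs⟩ := exists_eq_ciInf_of_finite (f := fun i ↦ ‖F i - f‖)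
  have hbest (j : ι) : ‖F s - f‖ ≤ ‖F j - f‖ :=
    hs.trans_le (ciInf_le (Set.finite_range _).bddBelow j)
  let X : ι → Ω → ℝ := Function.update (fun j ↦ Z j s) s 0
  have hX (j : ι) : HasSubgaussianMGF (X j) c P := by
    rcases eq_or_ne j s with rfl | hj
    · simpa [X] using hasSubgaussianMGF_of_le HasSubgaussianMGF.zero (zero_le)
    · simpa [X, hj] using hZ j s hj
  have hexcess : ∀ᵐ ω ∂P, ∃ j, ‖F (ibar ω) - f‖ - ‖F s - f‖ ≤ 4 * ε * X j ω := by
    filter_upwards [hmin, ae_all_iff.2 fun j ↦ ae_all_iff.2 fun hj ↦ hZanti s j hj]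
      with ω hscore hanti
    rcases eq_or_ne (ibar ω) s with hi | hi
    · exact ⟨s, by simp [X, hi]⟩
    · obtain ⟨j, hj, hle⟩ :=
        exists_norm_sub_le_add_of_midpointScore_le hε hbest (hF.ne hi) hanti (hscore s)
      exact ⟨j, by simpa [X, hj, add_comm] using hle⟩
  have hint : Integrable (fun ω ↦ ‖F (ibar ω) - f‖) P :=
    (Integrable.of_finite (μ := P.map ibar) (f := fun i ↦ ‖F i - f‖)).comp_measurable hibar
  have hmax := integral_le_mul_sqrt_two_mul_log_card (by positivity : 0 ≤ 4 * ε) hX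
    (hint.sub (integrable_const _)) hexcess
  rw [integral_sub' hint (integrable_const _), integral_const, probReal_univ, one_smul, hs] at hmax
  linarith

end Selection

section L2

variable {α : Type*} [MeasurableSpace α] {μ : Measure α}

lemma inner_toLp_toLp {E : Type*} [NormedAddCommGroup E] [InnerProductSpace ℝ E] {x y : α → E}
    (hx : MemLp x 2 μ) (hy : MemLp y 2 μ) :
    ⟪hx.toLp x, hy.toLp y⟫ = ∫ t, ⟪x t, y t⟫ ∂μ := by
  rw [L2.inner_def]
  refine integral_congr_ae ?_
  filter_upwards [hx.coeFn_toLp, hy.coeFn_toLp] with t hxt hyt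
  rw [hxt, hyt]

lemma norm_toLp_sub_toLp {E : Type*} [NormedAddCommGroup E] {p : ℝ≥0∞} {x y : α → E}
    (hx : MemLp x p μ) (hy : MemLp y p μ) :
    ‖hx.toLp x - hy.toLp y‖ = (eLpNorm (fun t ↦ x t - y t) p μ).toReal := by
  rw [← MemLp.toLp_sub, Lp.norm_toLp]
  rfl

lemma midpoint_toLp_toLp {E : Type*} [NormedAddCommGroup E] [NormedSpace ℝ E] {p : ℝ≥0∞}
    {x y : α → E} (hx : MemLp x p μ) (hy : MemLp y p μ) :
    midpoint ℝ (hx.toLp x) (hy.toLp y) = ((hx.add hy).const_smul (2⁻¹ : ℝ)).toLp _ := by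
  rw [midpoint_eq_smul_add, invOf_eq_inv, ← MemLp.toLp_add, ← MemLp.toLp_const_smul]

variable {f x y : α → ℝ}

lemma inner_normalize_toLp_sub_toLp (hx : MemLp x 2 μ) (hy : MemLp y 2 μ) (hf : MemLp f 2 μ) :
    ⟪NormedSpace.normalize (hx.toLp x - hy.toLp y), hf.toLp f⟫ =
      ∫ t, (x t - y t) / (eLpNorm (fun t ↦ x t - y t) 2 μ).toReal * f t ∂μ := by
  rw [NormedSpace.normalize, norm_toLp_sub_toLp, ← MemLp.toLp_sub, ← MemLp.toLp_const_smul,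
    inner_toLp_toLp]
  simp only [Pi.smul_apply, Pi.sub_apply, smul_eq_mul, div_eq_inv_mul, Real.inner_apply]

lemma midpointContrast_toLp (hf : MemLp f 2 μ) (hx : MemLp x 2 μ) (hy : MemLp y 2 μ) :
    midpointContrast (hf.toLp f) (hx.toLp x) (hy.toLp y) =
      (∫ t, (x t - y t) / (eLpNorm (fun t ↦ x t - y t) 2 μ).toReal * ((x t + y t) / 2) ∂μ) -
        ∫ t, (x t - y t) / (eLpNorm (fun t ↦ x t - y t) 2 μ).toReal * f t ∂μ := by
  rw [midpointContrast, midpoint_toLp_toLp, inner_normalize_toLp_sub_toLp,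
    inner_normalize_toLp_sub_toLp]
  simp only [Pi.smul_apply, Pi.add_apply, smul_eq_mul, div_eq_inv_mul]

end L2

/-- Theorem 4 of the paper: the exact `L²` oracle inequality
`E‖f̄ − f‖₂ ≤ min_i ‖f_i − f‖₂ + 8ε√(2 ln N)` for the midpoint-based selection rule. -/
theorem stmt_9
    {d N : ℕ} (hd : 1 ≤ d) (hN : 2 ≤ N)
    (f : (Fin d → ℝ) → ℝ) (F : Fin N → (Fin d → ℝ) → ℝ)
    (hfm : Measurable f) (hFm : ∀ i, Measurable (F i))
    (hf : eLpNorm f 2 (cubeMeasure d) ≠ ⊤)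
    (hF : ∀ i, eLpNorm (F i) 2 (cubeMeasure d) ≠ ⊤)
    -- the `f_i` are pairwise distinct (as elements of `L²`)
    (hFdist : ∀ i j, i ≠ j → 0 < Lnorm 2 (fun t => F i t - F j t))
    (ε : ℝ) (hε : 0 < ε)
    -- the normalized probes `ψ_{ij}` and the midpoints `u_{ij}`
    (ψ : Fin N → Fin N → (Fin d → ℝ) → ℝ)
    (hψdef : ∀ i j, i ≠ j → ∀ t, ψ i j t =
      (F i t - F j t) / Lnorm 2 (fun u => F i u - F j u))
    (u : Fin N → Fin N → (Fin d → ℝ) → ℝ)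
    (hudef : ∀ i j t, u i j t = (F i t + F j t) / 2)
    -- the Gaussian noise
    {Ω : Type} [MeasurableSpace Ω] (P : Measure Ω) [IsProbabilityMeasure P]
    (Z : Fin N → Fin N → Ω → ℝ) (hZm : ∀ i j, Measurable (Z i j))
    (hZlaw : ∀ i j, i ≠ j → Measure.map (Z i j) P = ProbabilityTheory.gaussianReal 0 1)
    (hZanti : ∀ i j, i ≠ j → ∀ᵐ ω ∂P, Z j i ω = - Z i j ω)
    -- the selection rule
    (Mbar : Fin N → Ω → ℝ)
    (hM : ∀ i ω, Mbar i ω = ⨆ j : {j : Fin N // j ≠ i},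
      ((∫ t, ψ i j.1 t * u i j.1 t ∂(cubeMeasure d)) -
        ((∫ t, ψ i j.1 t * f t ∂(cubeMeasure d)) + ε * Z i j.1 ω)))
    (ibar : Ω → Fin N) (hibarm : Measurable ibar)
    (hmin : ∀ ω i, Mbar (ibar ω) ω ≤ Mbar i ω) :
    ∫ ω, Lnorm 2 (fun t => F (ibar ω) t - f t) ∂P ≤
      (⨅ i, Lnorm 2 (fun t => F i t - f t)) + 8 * ε * Real.sqrt (2 * Real.log N) := by
  have hfL : MemLp f 2 (cubeMeasure d) := ⟨hfm.aestronglyMeasurable, hf.lt_top⟩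
  have hFL (i : Fin N) : MemLp (F i) 2 (cubeMeasure d) :=
    ⟨(hFm i).aestronglyMeasurable, (hF i).lt_top⟩
  have hnorm (i : Fin N) : Lnorm 2 (fun t ↦ F i t - f t) = ‖(hFL i).toLp (F i) - hfL.toLp f‖ :=
    (norm_toLp_sub_toLp (hFL i) hfL).symm
  have hinj : Function.Injective fun i ↦ (hFL i).toLp (F i) := fun i j hij ↦ by
    by_contra hne
    apply (hFdist i j hne).ne'
    rw [Lnorm, ← norm_toLp_sub_toLp (hFL i) (hFL j), sub_eq_zero.2 hij, norm_zero]
  have hscore (i : Fin N) (ω : Ω) : Mbar i ω =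
      midpointScore (hfL.toLp f) (fun i ↦ (hFL i).toLp (F i)) ε (fun i j ↦ Z i j ω) i := by
    rw [hM, midpointScore]
    congr! 2 with j
    rw [midpointContrast_toLp, sub_sub]
    simp only [hψdef i j j.2.symm, hudef, Lnorm]
  have horacle := stmt_9_general hinj hε.le
    (fun i j hij ↦ hasSubgaussianMGF_of_map_eq_gaussianReal (hZlaw i j hij)) hZanti hibarm
    (ae_of_all P fun ω i ↦ by simpa only [hscore] using hmin ω i)
  rw [NNReal.coe_one, mul_one, Fintype.card_fin] at horacle
  simp only [hnorm]
  refine horacle.trans ?_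
  gcongr
  norm_num
end

section
/- For the normal-means aggregation procedure described in the context, if Ψ is a (γ,p)-good set of probe vectors, then the selected estimator μ̂ = μ_î satisfies E|μ̂ − μ|_p ≤ (2·max_{ψ∈Ψ*} |ψ|_q + 1)·min_{i∈I_N} |μ_i − μ|_p + 2κε·max_{ψ∈Ψ*} |ψ|_Σ + γ + 2Lδ. -/
open MeasureTheory Matrix
open scoped ENNReal

/-- The `ℓ_r` norm of a vector in `ℝ^n`, for `r ∈ [1,∞]`. -/
noncomputable def lnorm {n : ℕ} (r : ℝ≥0∞) (v : Fin n → ℝ) : ℝ :=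
  if r = ⊤ then ⨆ k, |v k| else (∑ k, |v k| ^ r.toReal) ^ (1 / r.toReal)

/-- The seminorm `|ψ|_Σ = √(ψᵀ Σ ψ)` induced by a positive semidefinite matrix `Σ`. -/
noncomputable def signorm {n : ℕ} (Sig : Matrix (Fin n) (Fin n) ℝ) (v : Fin n → ℝ) : ℝ :=
  Real.sqrt (v ⬝ᵥ Sig.mulVec v)

/-!
On the event where every probe sees at most its noise tolerance, each score `M̂ᵢ` is at most
`|μᵢ - μ|`. The selected score is no larger than that of a reference estimator `μᵢ`, so both
`μᵢ` and the selected `μⱼ` nearly match the observation along the probe designated for the pair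
`(i, j)`. That probe almost realises `|μᵢ - μⱼ|`, so the two estimators are close, and the triangle
inequality bounds the loss. On the exceptional event the loss is at most `2L`.
-/

section EllNorm

variable {n : ℕ} {p q r : ℝ≥0∞}

lemma lnorm_eq_norm_toLp [Fact (1 ≤ r)] (v : Fin n → ℝ) : lnorm r v = ‖WithLp.toLp r v‖ := by
  rcases eq_or_ne r ⊤ with rfl | hr
  · simp [lnorm, PiLp.norm_eq_ciSup]
  · have hr_pos : 0 < r.toReal := ENNReal.toReal_pos (zero_lt_one.trans_le Fact.out).ne' hr
    simp [lnorm, hr, PiLp.norm_eq_sum hr_pos]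

/-- The norm `lnorm r`, for `1 ≤ r`, bundled as a seminorm on `ℝ^n`. -/
noncomputable def lnormSeminorm (n : ℕ) (r : ℝ≥0∞) [Fact (1 ≤ r)] : Seminorm ℝ (Fin n → ℝ) :=
  Seminorm.of (lnorm r)
    (fun v w ↦ by simpa only [lnorm_eq_norm_toLp, WithLp.toLp_add] using norm_add_le _ _)
    (fun a v ↦ by simpa only [lnorm_eq_norm_toLp, WithLp.toLp_smul] using norm_smul _ _)

lemma lnorm_pos [Fact (1 ≤ r)] {v : Fin n → ℝ} (hv : v ≠ 0) : 0 < lnorm r v := by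
  rw [lnorm_eq_norm_toLp, norm_pos_iff]
  exact (WithLp.toLp_eq_zero r).not.2 hv

lemma abs_dotProduct_le_lnorm_mul_lnorm [p.HolderConjugate q] (v w : Fin n → ℝ) :
    |v ⬝ᵥ w| ≤ lnorm p v * lnorm q w := by
  have : Fact (1 ≤ p) := ⟨ENNReal.HolderConjugate.one_le p q⟩
  have : Fact (1 ≤ q) := ⟨ENNReal.HolderConjugate.one_le q p⟩
  let v' : lp (fun _ : Fin n ↦ ℝ) p := Equiv.lpPiLp.symm (WithLp.toLp p v)
  let w' : lp (fun _ : Fin n ↦ ℝ) q := Equiv.lpPiLp.symm (WithLp.toLp q w)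
  let pairing := lp.dualPairing p q (fun _ : Fin n ↦ ContinuousLinearMap.mul ℝ ℝ) (K := 1)
    fun _ ↦ ContinuousLinearMap.opNorm_mul_le ℝ ℝ
  have hpairing : pairing v' w' = v ⬝ᵥ w :=
    (lp.dualPairing_apply _ _ v' w').trans (tsum_fintype _)
  calc |v ⬝ᵥ w| = ‖pairing v' w'‖ := by rw [hpairing, Real.norm_eq_abs]
    _ ≤ 1 * ‖v'‖ * ‖w'‖ := pairing.le_of_opNorm₂_le_of_le (lp.norm_dualPairing _ _) le_rfl le_rfl
    _ = lnorm p v * lnorm q w := by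
      rw [one_mul, ← equiv_lpPiLp_norm v', ← equiv_lpPiLp_norm w', lnorm_eq_norm_toLp,
        lnorm_eq_norm_toLp, Equiv.apply_symm_apply, Equiv.apply_symm_apply]

end EllNorm

lemma le_ciSup_div_of_exists_mul_lt {K : Type*} [Finite K] {f σ : K → ℝ} {κ : ℝ}
    (hσ : ∀ k, 0 < σ k) (h : ∃ k, κ * σ k < f k) : κ ≤ ⨆ k, f k / σ k := by
  obtain ⟨k, hk⟩ := h
  exact ((le_div_iff₀ (hσ k)).2 hk.le).trans
    (le_ciSup (f := fun k ↦ f k / σ k) (Set.finite_range _).bddAbove k)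

lemma integral_le_of_notMem_le_of_le_add {Ω : Type*} [MeasurableSpace Ω] {P : Measure Ω}
    [IsFiniteMeasure P] {f : Ω → ℝ} {A : Set Ω} {B C : ℝ} (hf : Integrable f P)
    (hoff : ∀ ω, ω ∉ A → f ω ≤ B) (hle : ∀ ω, f ω ≤ B + C) :
    ∫ ω, f ω ∂P ≤ P.real Set.univ * B + P.real A * C := by
  set H := toMeasurable P A
  have hH : MeasurableSet H := measurableSet_toMeasurable P A
  have hfH (ω : Ω) : f ω ≤ B + H.indicator (fun _ ↦ C) ω := by
    by_cases hω : ω ∈ H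
    · simpa only [Set.indicator_of_mem hω] using hle ω
    · simpa only [Set.indicator_of_notMem hω, add_zero] using
        hoff ω fun hA ↦ hω (subset_toMeasurable P A hA)
  have hind : Integrable (H.indicator fun _ ↦ C) P := (integrable_const C).indicator hH
  calc ∫ ω, f ω ∂P ≤ ∫ ω, (B + H.indicator (fun _ ↦ C) ω) ∂P :=
        integral_mono hf ((integrable_const B).add hind) hfH
    _ = P.real Set.univ * B + P.real H * C := by
        rw [integral_add (integrable_const B) hind, integral_const, integral_indicator_const C hH,
          smul_eq_mul, smul_eq_mul]
    _ = P.real Set.univ * B + P.real A * C := by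
        simp only [H, measureReal_def, measure_toMeasurable]

section Probes

variable {E K : Type*} [AddCommGroup E] [Module ℝ E]

/-- The score `M̂` of a candidate `a` given the observation `y`: the largest excess of a residual
`|ψₖ(y - a)|` over the noise tolerance `τₖ`, relative to the size `cₖ` of the probe `ψₖ`. In the
paper `cₖ = |ψₖ|_q` and `τₖ = κε|ψₖ|_Σ`. -/
noncomputable def probeScore (ψ : K → Module.Dual ℝ E) (c τ : K → ℝ) (y a : E) : ℝ :=
  ⨆ k, (|ψ k (y - a)| - τ k) / c k

variable {p : Seminorm ℝ E} {ψ : K → Module.Dual ℝ E} {c τ : K → ℝ} {y μ a b : E}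

lemma probe_excess_le (hc : ∀ k, 0 < c k) (hψ : ∀ k v, |ψ k v| ≤ c k * p v)
    (hnoise : ∀ k, |ψ k (y - μ)| ≤ τ k) (a : E) (k : K) :
    (|ψ k (y - a)| - τ k) / c k ≤ p (a - μ) := by
  rw [div_le_iff₀' (hc k), sub_le_iff_le_add]
  calc |ψ k (y - a)| = |ψ k (y - μ) - ψ k (a - μ)| := by rw [← map_sub, sub_sub_sub_cancel_right]
    _ ≤ |ψ k (y - μ)| + |ψ k (a - μ)| := abs_sub _ _
    _ ≤ c k * p (a - μ) + τ k := by linarith [hnoise k, hψ k (a - μ)]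

lemma probeScore_le (hc : ∀ k, 0 < c k) (hψ : ∀ k v, |ψ k v| ≤ c k * p v)
    (hnoise : ∀ k, |ψ k (y - μ)| ≤ τ k) (a : E) : probeScore ψ c τ y a ≤ p (a - μ) :=
  Real.iSup_le (probe_excess_le hc hψ hnoise a) (apply_nonneg p _)

lemma abs_probe_residual_le_probeScore (hc : ∀ k, 0 < c k) (hψ : ∀ k v, |ψ k v| ≤ c k * p v)
    (hnoise : ∀ k, |ψ k (y - μ)| ≤ τ k) (a : E) (k : K) :
    |ψ k (y - a)| ≤ c k * probeScore ψ c τ y a + τ k := by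
  have hbdd : BddAbove (Set.range fun k ↦ (|ψ k (y - a)| - τ k) / c k) :=
    ⟨p (a - μ), Set.forall_mem_range.2 (probe_excess_le hc hψ hnoise a)⟩
  rw [← sub_le_iff_le_add, ← div_le_iff₀' (hc k)]
  exact le_ciSup hbdd k

lemma seminorm_sub_le_of_probeScore_le (hc : ∀ k, 0 < c k) (hψ : ∀ k v, |ψ k v| ≤ c k * p v)
    (hnoise : ∀ k, |ψ k (y - μ)| ≤ τ k) (hscore : probeScore ψ c τ y b ≤ probeScore ψ c τ y a)
    {k : K} {γ : ℝ} (hk : p (a - b) ≤ ψ k (a - b) + γ) :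
    p (b - μ) ≤ (2 * c k + 1) * p (a - μ) + 2 * τ k + γ := by
  have ha : probeScore ψ c τ y a ≤ p (a - μ) := probeScore_le hc hψ hnoise a
  have hresidual {x : E} (hx : probeScore ψ c τ y x ≤ p (a - μ)) :
      |ψ k (y - x)| ≤ c k * p (a - μ) + τ k :=
    (abs_probe_residual_le_probeScore hc hψ hnoise x k).trans <| by
      gcongr
      exact (hc k).le
  have hprobe : ψ k (a - b) ≤ 2 * (c k * p (a - μ) + τ k) :=
    calc ψ k (a - b) = ψ k (y - b) - ψ k (y - a) := by rw [← map_sub, sub_sub_sub_cancel_left]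
      _ ≤ |ψ k (y - b)| + |ψ k (y - a)| := (le_abs_self _).trans (abs_sub _ _)
      _ ≤ 2 * (c k * p (a - μ) + τ k) := by
        linarith [hresidual (hscore.trans ha), hresidual ha]
  calc p (b - μ) = p ((a - μ) - (a - b)) := by rw [sub_sub_sub_cancel_left]
    _ ≤ p (a - μ) + p (a - b) := map_sub_le_add p _ _
    _ ≤ (2 * c k + 1) * p (a - μ) + 2 * τ k + γ := by linarith

variable {ι : Type*} {θ : ι → E} {i j : ι} {rep : ι → K} {γ C T : ℝ}

lemma seminorm_selected_sub_le (hc : ∀ k, 0 < c k) (hψ : ∀ k v, |ψ k v| ≤ c k * p v)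
    (hγ : 0 ≤ γ) (hnoise : ∀ k, |ψ k (y - μ)| ≤ τ k)
    (hgood : ∀ j, j ≠ i → p (θ i - θ j) ≤ ψ (rep j) (θ i - θ j) + γ)
    (hC : 0 ≤ C) (hcC : ∀ j, j ≠ i → c (rep j) ≤ C)
    (hT : 0 ≤ T) (hτT : ∀ j, j ≠ i → τ (rep j) ≤ T)
    (hscore : probeScore ψ c τ y (θ j) ≤ probeScore ψ c τ y (θ i)) :
    p (θ j - μ) ≤ (2 * C + 1) * p (θ i - μ) + 2 * T + γ := by
  rcases eq_or_ne j i with rfl | hji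
  · linarith [mul_nonneg hC (apply_nonneg p (θ j - μ))]
  · refine (seminorm_sub_le_of_probeScore_le hc hψ hnoise hscore (hgood j hji)).trans ?_
    gcongr
    exacts [hcC j hji, hτT j hji]

end Probes

-- The noise event is not `κ ≤ ⨆ k, …`: for infinite `K` that supremum could be the junk value `0`.
theorem stmt_14_general {E ι K Ω : Type*} [AddCommGroup E] [Module ℝ E]
    [MeasurableSpace ι] [DiscreteMeasurableSpace ι] (p : Seminorm ℝ E) {γ : ℝ} (hγ : 0 ≤ γ)
    (μ : E) (θ : ι → E) {L : ℝ} (hμL : p μ ≤ L) (hθL : ∀ i, p (θ i) ≤ L)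
    (ψ : K → Module.Dual ℝ E) (c σ : K → ℝ) (hc : ∀ k, 0 < c k)
    (hψ : ∀ k v, |ψ k v| ≤ c k * p v) (hσ : ∀ k, 0 ≤ σ k) (i : ι) (rep : ι → K)
    (hgood : ∀ j, j ≠ i → p (θ i - θ j) ≤ ψ (rep j) (θ i - θ j) + γ)
    (hcbdd : BddAbove (Set.range fun j : {j // j ≠ i} ↦ c (rep j)))
    (hσbdd : BddAbove (Set.range fun j : {j // j ≠ i} ↦ σ (rep j)))
    [MeasurableSpace Ω] (P : Measure Ω) [IsProbabilityMeasure P] (w : Ω → E)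
    {ε δ κ : ℝ} (hε : 0 ≤ ε) (hκ : 0 ≤ κ)
    (hnoise : P.real {ω | ∃ k, κ * σ k < |ψ k (w ω)|} ≤ δ)
    (ihat : Ω → ι) (hihat : Measurable ihat)
    (hmin : ∀ ω, probeScore ψ c (fun k ↦ κ * ε * σ k) (μ + ε • w ω) (θ (ihat ω)) ≤
      probeScore ψ c (fun k ↦ κ * ε * σ k) (μ + ε • w ω) (θ i)) :
    ∫ ω, p (θ (ihat ω) - μ) ∂P ≤
      (2 * (⨆ j : {j // j ≠ i}, c (rep j)) + 1) * p (θ i - μ)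
        + 2 * κ * ε * (⨆ j : {j // j ≠ i}, σ (rep j)) + γ + 2 * L * δ := by
  set C := ⨆ j : {j // j ≠ i}, c (rep j)
  set S := ⨆ j : {j // j ≠ i}, σ (rep j)
  have hC : 0 ≤ C := Real.iSup_nonneg fun j ↦ (hc _).le
  have hS : 0 ≤ S := Real.iSup_nonneg fun j ↦ hσ _
  have hL : 0 ≤ L := (apply_nonneg p μ).trans hμL
  have hloss (j : ι) : p (θ j - μ) ≤ 2 * L := by
    linarith [map_sub_le_add p (θ j) μ, hθL j]
  have hint : Integrable (fun ω ↦ p (θ (ihat ω) - μ)) P :=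
    .of_bound (Measurable.of_discrete (f := fun j ↦ p (θ j - μ)) |>.comp hihat).aestronglyMeasurable
      (2 * L) (.of_forall fun ω ↦ by
        simpa only [Real.norm_of_nonneg (apply_nonneg p _)] using hloss (ihat ω))
  set B := (2 * C + 1) * p (θ i - μ) + 2 * κ * ε * S + γ
  have hB : 0 ≤ B := by positivity
  set noisy := {ω | ∃ k, κ * σ k < |ψ k (w ω)|}
  have hquiet (ω : Ω) (hω : ω ∉ noisy) : p (θ (ihat ω) - μ) ≤ B := by
    have hdev (k : K) : |ψ k (μ + ε • w ω - μ)| ≤ κ * ε * σ k := by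
      rw [add_sub_cancel_left, map_smul, smul_eq_mul, abs_mul, abs_of_nonneg hε]
      linarith [mul_le_mul_of_nonneg_left (not_lt.1 fun hk ↦ hω ⟨k, hk⟩) hε]
    have hτ (j : ι) (hj : j ≠ i) : κ * ε * σ (rep j) ≤ κ * ε * S :=
      mul_le_mul_of_nonneg_left (le_ciSup hσbdd ⟨j, hj⟩) (by positivity)
    have := seminorm_selected_sub_le hc hψ hγ hdev hgood hC (fun j hj ↦ le_ciSup hcbdd ⟨j, hj⟩)
      (by positivity) hτ (hmin ω)
    simpa only [B, mul_assoc] using this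
  calc ∫ ω, p (θ (ihat ω) - μ) ∂P ≤ P.real Set.univ * B + P.real noisy * (2 * L) :=
        integral_le_of_notMem_le_of_le_add hint hquiet
          fun ω ↦ (hloss _).trans (le_add_of_nonneg_left hB)
    _ ≤ B + δ * (2 * L) := by
        rw [probReal_univ, one_mul]
        gcongr
    _ = B + 2 * L * δ := by rw [mul_comm δ]

/-- Theorem 6 of the paper: oracle inequality for the normal-means
aggregation procedure with a `(γ,p)`-good set of probe vectors. -/
theorem stmt_14
    {n N : ℕ} (hn : 1 ≤ n) (hN : 2 ≤ N)
    (p q : ℝ≥0∞) (hp : 1 ≤ p) (hpq : 1 / p + 1 / q = 1)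
    (γ : ℝ) (hγ : 0 ≤ γ)
    (mu : Fin n → ℝ) (Mu : Fin N → Fin n → ℝ)
    (hdist : ∀ i j, i ≠ j → Mu i ≠ Mu j)
    (L : ℝ) (hL : L = max (lnorm p mu) (⨆ i, lnorm p (Mu i)))
    (Sig : Matrix (Fin n) (Fin n) ℝ) (hSig : Sig.PosSemidef)
    -- the finite `(γ,p)`-good set of probe vectors `Ψ`, indexed by `K`
    {K : Type} [Fintype K] [Nonempty K]
    (ψ : K → Fin n → ℝ) (hψ0 : ∀ k, ψ k ≠ 0)
    (hψSig : ∀ k, 0 < signorm Sig (ψ k))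
    (rep : Fin N → Fin N → K)
    (hgood : ∀ i j, i ≠ j →
      |ψ (rep i j) ⬝ᵥ (Mu i - Mu j) - lnorm p (Mu i - Mu j)| ≤ γ)
    -- the aggregation procedure, based on the observation `Y = μ + εw`
    {Ω : Type} [MeasurableSpace Ω] (P : Measure Ω) [IsProbabilityMeasure P]
    (w : Ω → Fin n → ℝ) (hw : Measurable w)
    (ε δ : ℝ) (hε : 0 < ε) (hδ0 : 0 < δ) (hδ1 : δ < 1)
    (κ : ℝ) (hκpos : 0 < κ)
    (hκ : (P {ω | κ ≤ ⨆ k, |ψ k ⬝ᵥ w ω| / signorm Sig (ψ k)}).toReal ≤ δ)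
    (Mhat : Fin N → Ω → ℝ)
    (hM : ∀ i ω, Mhat i ω = ⨆ k,
      (|ψ k ⬝ᵥ (mu + ε • w ω - Mu i)| - κ * ε * signorm Sig (ψ k)) / lnorm q (ψ k))
    (ihat : Ω → Fin N) (hihatm : Measurable ihat)
    (hmin : ∀ ω i, Mhat (ihat ω) ω ≤ Mhat i ω)
    (istar : Fin N)
    (histar : ∀ i, lnorm p (Mu istar - mu) ≤ lnorm p (Mu i - mu)) :
    ∫ ω, lnorm p (Mu (ihat ω) - mu) ∂P ≤
      (2 * (⨆ j : {j : Fin N // j ≠ istar}, lnorm q (ψ (rep istar j.1))) + 1) *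
          (⨅ i, lnorm p (Mu i - mu))
        + 2 * κ * ε * (⨆ j : {j : Fin N // j ≠ istar}, signorm Sig (ψ (rep istar j.1)))
        + γ + 2 * L * δ := by
  have hpq' : q.HolderConjugate p := by
    rwa [ENNReal.holderConjugate_iff, add_comm, ← one_div, ← one_div]
  have : Fact (1 ≤ p) := ⟨hp⟩
  have : Fact (1 ≤ q) := ⟨ENNReal.HolderConjugate.one_le q p⟩
  have hinf : ⨅ i, lnorm p (Mu i - mu) = lnorm p (Mu istar - mu) :=
    IsLeast.csInf_eq ⟨⟨istar, rfl⟩, Set.forall_mem_range.2 histar⟩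
  have hnoise : P.real {ω | ∃ k, κ * signorm Sig (ψ k) < |ψ k ⬝ᵥ w ω|} ≤ δ :=
    (measureReal_mono fun ω ↦ le_ciSup_div_of_exists_mul_lt hψSig).trans hκ
  have hMuL (i : Fin N) : lnorm p (Mu i) ≤ L :=
    hL ▸ le_max_of_le_right (le_ciSup (f := fun i ↦ lnorm p (Mu i)) (Set.finite_range _).bddAbove i)
  have hprobe (j : Fin N) (hj : j ≠ istar) :
      lnorm p (Mu istar - Mu j) ≤ ψ (rep istar j) ⬝ᵥ (Mu istar - Mu j) + γ := by
    linarith [(abs_le.1 (hgood istar j hj.symm)).1]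
  rw [hinf]
  exact stmt_14_general (lnormSeminorm n p) hγ mu Mu (hL ▸ le_max_left _ _) hMuL
    (fun k ↦ dotProductBilin ℝ ℝ (ψ k)) (fun k ↦ lnorm q (ψ k)) (fun k ↦ signorm Sig (ψ k))
    (fun k ↦ lnorm_pos (hψ0 k)) (fun k ↦ abs_dotProduct_le_lnorm_mul_lnorm (ψ k))
    (fun k ↦ (hψSig k).le) istar (rep istar) hprobe
    (Set.finite_range _).bddAbove (Set.finite_range _).bddAbove P w hε.le hκpos.le hnoise
    ihat hihatm fun ω ↦ (hM _ ω).symm.trans_le ((hmin ω istar).trans_eq (hM _ ω))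
end
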